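/- (Trivial resonance lower bound near k = 0) For every k₀ > 0 and every j, ε ∈ {1, −1} there exist δ > 0 and C > 0 such that for all k, m ∈ ℝ with |k| ≤ δ and |m − k₀| ≤ δ one has |j·ω(k) − ε·(ω(k − m) + ω(m))| ≥ C·|k|. -/

import Mathlib

noncomputable def qhat (k : ℝ) : ℝ := Real.sqrt ((2 + k ^ 2) / (1 + k ^ 2))

noncomputable def ω (k : ℝ) : ℝ := k * qhat k

/-!
Write `q̂ = qhat`. For `k` small and `m` near `k₀`, oddness of `ω` gives
`j ω(k) - ε (ω(k - m) + ω(m)) = j ω(k) - ε (ω(m) - ω(m - k)) = (j ω'(0) - ε ω'(k₀)) k + o(k)`,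
uniformly in `m` because `ω` is strictly differentiable at `k₀`. The coefficient of `k` is nonzero:
`ω' = q̂ + k q̂'` lies between `0` and `q̂`, and `q̂(k₀) < q̂(0) = ω'(0)`.
-/

open Filter Topology Asymptotics

theorem isBigO_fst_sub_increments {𝕜 E : Type*} [NontriviallyNormedField 𝕜] [NormedAddCommGroup E]
    [NormedSpace 𝕜 E] {f g : 𝕜 → E} {a b : E} {x y : 𝕜} (hf : HasDerivAt f a x)
    (hg : HasStrictDerivAt g b y) (hab : a ≠ b) :
    (fun p : 𝕜 × 𝕜 => p.1) =O[𝓝 (0, y)]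
      fun p => (f (x + p.1) - f x) - (g p.2 - g (p.2 - p.1)) := by
  have hf_incr : (fun p : 𝕜 × 𝕜 => f (x + p.1) - f x - p.1 • a) =o[𝓝 (0, y)] fun p => p.1 :=
    (hasDerivAt_iff_isLittleO_nhds_zero.mp hf).comp_tendsto continuous_fst.continuousAt
  have hshift : Tendsto (fun p : 𝕜 × 𝕜 => (p.2, p.2 - p.1)) (𝓝 (0, y)) (𝓝 (y, y)) :=
    Continuous.tendsto' (by fun_prop) _ _ (by simp)
  have hg_incr : (fun p : 𝕜 × 𝕜 => g p.2 - g (p.2 - p.1) - p.1 • b) =o[𝓝 (0, y)] fun p => p.1 := by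
    simpa only [Function.comp_def, sub_sub_cancel, ContinuousLinearMap.toSpanSingleton_apply]
      using hg.isLittleO.comp_tendsto hshift
  have hpos : 0 < ‖a - b‖ := norm_pos_iff.mpr (sub_ne_zero.mpr hab)
  have hlin : (fun p : 𝕜 × 𝕜 => p.1) =O[𝓝 (0, y)] fun p => p.1 • (a - b) :=
    isBigO_iff''.mpr ⟨‖a - b‖, hpos, .of_forall fun p => by rw [norm_smul, mul_comm]⟩
  have hequiv : (fun p : 𝕜 × 𝕜 => (f (x + p.1) - f x) - (g p.2 - g (p.2 - p.1)))
      ~[𝓝 (0, y)] fun p => p.1 • (a - b) := by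
    refine ((hf_incr.sub hg_incr).trans_isBigO hlin).congr_left fun p => ?_
    simp only [Pi.sub_apply, smul_sub]
    abel
  exact hlin.trans hequiv.isBigO_symm

theorem exists_dist_le_imp_mul_norm_le_of_isBigO {α β E F : Type*} [PseudoMetricSpace α]
    [PseudoMetricSpace β] [Norm E] [SeminormedAddGroup F]
    {u : α × β → E} {v : α × β → F} {x : α} {y : β} (h : u =O[𝓝 (x, y)] v) :
    ∃ δ > (0 : ℝ), ∃ C > (0 : ℝ), ∀ a b, dist a x ≤ δ → dist b y ≤ δ →
      C * ‖u (a, b)‖ ≤ ‖v (a, b)‖ := by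
  obtain ⟨C, hC, hbound⟩ := isBigO_iff''.mp h
  obtain ⟨δ, hδ, hball⟩ := Metric.nhds_basis_closedBall.eventually_iff.mp hbound
  exact ⟨δ, hδ, C, hC, fun a b ha hb => @hball (a, b) (max_le ha hb)⟩

theorem qhat_sq (k : ℝ) : qhat k ^ 2 = (2 + k ^ 2) / (1 + k ^ 2) :=
  Real.sq_sqrt (by positivity)

theorem qhat_pos (k : ℝ) : 0 < qhat k :=
  Real.sqrt_pos.mpr (by positivity)

theorem qhat_lt_qhat {x y : ℝ} (h : |x| < |y|) : qhat y < qhat x := by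
  have hsq : x ^ 2 < y ^ 2 := sq_lt_sq.mpr h
  refine Real.sqrt_lt_sqrt (by positivity) ?_
  rw [div_lt_div_iff₀ (by positivity) (by positivity)]
  linarith

theorem hasStrictDerivAt_qhat (k : ℝ) :
    HasStrictDerivAt qhat (-k / ((1 + k ^ 2) ^ 2 * qhat k)) k := by
  have hsq : HasStrictDerivAt (fun x : ℝ => x ^ 2) (2 * k) k := by
    simpa using hasStrictDerivAt_pow 2 k
  have hquot := (hsq.const_add 2).fun_div (hsq.const_add 1) (by positivity)
  refine (hquot.sqrt (by positivity)).congr_deriv ?_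
  change _ / (2 * qhat k) = _
  have hq : qhat k ≠ 0 := (qhat_pos k).ne'
  field_simp
  ring

theorem ω_zero : ω 0 = 0 := zero_mul _

theorem ω_neg (k : ℝ) : ω (-k) = -ω k := by
  simp only [ω, qhat, neg_sq, neg_mul]

/-- The group velocity `ω'`, in the form `q̂ + k q̂'` given by the product rule. -/
noncomputable def groupVelocity (k : ℝ) : ℝ :=
  qhat k - k ^ 2 / ((1 + k ^ 2) ^ 2 * qhat k)

theorem hasStrictDerivAt_ω (k : ℝ) : HasStrictDerivAt ω (groupVelocity k) k := by
  refine ((hasStrictDerivAt_id k).fun_mul (hasStrictDerivAt_qhat k)).congr_deriv ?_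
  rw [groupVelocity, id]
  ring

theorem groupVelocity_zero : groupVelocity 0 = qhat 0 := by
  simp [groupVelocity]

theorem groupVelocity_le_qhat (k : ℝ) : groupVelocity k ≤ qhat k :=
  sub_le_self _ (div_nonneg (sq_nonneg k) (mul_nonneg (sq_nonneg _) (qhat_pos k).le))

theorem groupVelocity_pos (k : ℝ) : 0 < groupVelocity k := by
  have hq := qhat_pos k
  rw [groupVelocity, sub_pos, div_lt_iff₀ (by positivity)]
  calc k ^ 2 < (2 + k ^ 2) * (1 + k ^ 2) := by nlinarith [sq_nonneg k]
    _ = (1 + k ^ 2) ^ 2 * qhat k ^ 2 := by rw [qhat_sq]; field_simp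
    _ = qhat k * ((1 + k ^ 2) ^ 2 * qhat k) := by ring

theorem abs_groupVelocity_lt_abs_groupVelocity_zero {k : ℝ} (hk : k ≠ 0) :
    |groupVelocity k| < |groupVelocity 0| := by
  rw [abs_of_pos (groupVelocity_pos k), abs_of_pos (groupVelocity_pos 0), groupVelocity_zero]
  exact (groupVelocity_le_qhat k).trans_lt (qhat_lt_qhat (by simpa using hk))

theorem mul_groupVelocity_zero_ne_mul {k j ε : ℝ} (hk : k ≠ 0) (hj : j ≠ 0) (hεj : |ε| ≤ |j|) :
    j * groupVelocity 0 ≠ ε * groupVelocity k := by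
  refine fun h => (congrArg abs h).not_gt ?_
  rw [abs_mul, abs_mul]
  exact mul_lt_mul_of_le_of_lt_of_nonneg_of_pos hεj
    (abs_groupVelocity_lt_abs_groupVelocity_zero hk) (abs_nonneg _) (abs_pos.mpr hj)

theorem isBigO_resonance {k₀ j ε : ℝ} (h : j * groupVelocity 0 ≠ ε * groupVelocity k₀) :
    (fun p : ℝ × ℝ => p.1) =O[𝓝 (0, k₀)] fun p => j * ω p.1 - ε * (ω (p.1 - p.2) + ω p.2) := by
  refine (isBigO_fst_sub_increments ((hasStrictDerivAt_ω 0).hasDerivAt.const_mul j)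
    ((hasStrictDerivAt_ω k₀).const_mul ε) h).congr_right fun p => ?_
  rw [← neg_sub p.2 p.1, ω_neg, zero_add, ω_zero]
  ring

theorem stmt5_general {k₀ j ε : ℝ} (hk₀ : k₀ ≠ 0) (hj : j ≠ 0) (hεj : |ε| ≤ |j|) :
    ∃ δ > (0 : ℝ), ∃ C > (0 : ℝ), ∀ k m : ℝ, |k| ≤ δ → |m - k₀| ≤ δ →
      C * |k| ≤ |j * ω k - ε * (ω (k - m) + ω m)| := by
  have hres := isBigO_resonance (mul_groupVelocity_zero_ne_mul hk₀ hj hεj)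
  simpa only [Real.dist_eq, Real.norm_eq_abs, sub_zero]
    using exists_dist_le_imp_mul_norm_le_of_isBigO hres

theorem stmt5 (k₀ : ℝ) (hk₀ : 0 < k₀) (j ε : ℝ)
    (hj : j = 1 ∨ j = -1) (hε : ε = 1 ∨ ε = -1) :
    ∃ δ > (0 : ℝ), ∃ C > (0 : ℝ), ∀ k m : ℝ, |k| ≤ δ → |m - k₀| ≤ δ →
      C * |k| ≤ |j * ω k - ε * (ω (k - m) + ω m)| :=
  stmt5_general hk₀.ne' (by rcases hj with rfl | rfl <;> norm_num)
    (by rcases hj with rfl | rfl <;> rcases hε with rfl | rfl <;> norm_num)
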